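/- arXiv:1803.04174 — 2 statements merged into one kernel-verified Lean document; each statement's English description precedes it below -/
import Mathlib

section
/- Let q_1 < q_2 < ... < q_n be positive rational numbers and let Q be the n×n matrix with (i,j) entry (q_i + q_j)^(q_i + q_j). Then for every real r > 0, the entrywise power Q^{∘r} (with (i,j) entry (q_i + q_j)^{(q_i + q_j)r}) is positive definite and strictly totally positive. -/
section Aux
open Finset

/-- The Cauchy kernel is strictly positive definite. -/
theorem cauchy_pos {ι : Type*} [Fintype ι] [DecidableEq ι] (a : ι → ℝ) (ha : ∀ i, 0 < a i)
    (hinj : Function.Injective a) :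
    ∀ (N : ℕ) (c : ι → ℝ), (univ.filter (fun i => c i ≠ 0)).card = N → c ≠ 0 →
      0 < ∑ i, ∑ j, c i * c j / (a i + a j) := by
  intro N
  induction N with
  | zero =>
    intro c hN hc
    exfalso
    apply hc
    rw [Finset.card_eq_zero, Finset.filter_eq_empty_iff] at hN
    funext i
    simpa using hN (mem_univ i)
  | succ N ih =>
    intro c hN hc
    obtain ⟨k, hk⟩ : ∃ k, c k ≠ 0 := by
      by_contra! h
      exact hc (funext h)
    set d : ι → ℝ := fun i => c i * ((a i - a k) / (a i + a k)) with hd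
    have key : ∑ i, ∑ j, c i * c j / (a i + a j) =
        2 * a k * (∑ i, c i / (a i + a k)) ^ 2 + ∑ i, ∑ j, d i * d j / (a i + a j) := by
      rw [sq, Finset.sum_mul_sum, Finset.mul_sum, ← Finset.sum_add_distrib]
      refine Finset.sum_congr rfl fun i _ => ?_
      rw [Finset.mul_sum, ← Finset.sum_add_distrib]
      refine Finset.sum_congr rfl fun j _ => ?_
      have h1 := (add_pos (ha i) (ha j)).ne'
      have h2 := (add_pos (ha i) (ha k)).ne'
      have h3 := (add_pos (ha j) (ha k)).ne'
      simp only [hd]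
      field_simp
      ring
    rw [key]
    have hfil : univ.filter (fun i => d i ≠ 0) = (univ.filter (fun i => c i ≠ 0)).erase k := by
      ext i
      have h2 := (add_pos (ha i) (ha k)).ne'
      have h3 : a i - a k = 0 ↔ i = k := by rw [sub_eq_zero]; exact hinj.eq_iff
      simp [hd, h2, h3]
      tauto
    have hsq : 0 ≤ 2 * a k * (∑ i, c i / (a i + a k)) ^ 2 := by
      have := ha k
      positivity
    by_cases hd0 : d = 0
    · have hz : ∀ i, i ≠ k → c i = 0 := by
        intro i hi
        by_contra hci
        have : i ∈ univ.filter (fun i => d i ≠ 0) := by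
          rw [hfil]; simp [hi, hci]
        simp [hd0] at this
      have : ∑ i, c i / (a i + a k) = c k / (a k + a k) := by
        apply Finset.sum_eq_single k
        · intro i _ hi; simp [hz i hi]
        · simp
      have hak := ha k
      rw [this, hd0]
      simp only [Pi.zero_apply, zero_mul, zero_div, Finset.sum_const_zero, add_zero]
      have : c k / (a k + a k) ≠ 0 := div_ne_zero hk (by positivity)
      positivity
    · have := ih d (by rw [hfil, Finset.card_erase_of_mem (by simp [hk]), hN]; rfl) hd0
      linarith

/-- the logarithmic kernel is strictly positive definite -/
theorem logker_pos {ι : Type*} [Fintype ι] (x : ι → ℝ) (hx : ∀ i, 0 < x i)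
    (hinj : Function.Injective x) (c : ι → ℝ) (hc : c ≠ 0) :
    0 < ∑ i, ∑ j, c i * c j * ((x i + x j) * Real.log (x i + x j)
      - x i * Real.log (x i) - x j * Real.log (x j)) := by
  classical
  set F : ℝ → ℝ := fun s => ∑ i, ∑ j, c i * c j * ((x i + x j) * Real.log (x i + x j + s)
      - x i * Real.log (x i + s) - x j * Real.log (x j + s)) with hF
  have hderiv : ∀ s : ℝ, 0 ≤ s → HasDerivAt F (∑ i, ∑ j, c i * c j *
      ((x i + x j) * (1 / (x i + x j + s)) - x i * (1 / (x i + s)) - x j * (1 / (x j + s)))) s := by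
    intro s hs
    have hlog : ∀ t : ℝ, 0 < t → HasDerivAt (fun s => t * Real.log (t + s)) (t * (1 / (t + s))) s := by
      intro t ht
      exact (((hasDerivAt_id s).const_add t).log (by simp; positivity)).const_mul t
    refine HasDerivAt.fun_sum fun i _ => HasDerivAt.fun_sum fun j _ => ?_
    exact (((hlog _ (add_pos (hx i) (hx j))).sub (hlog _ (hx i))).sub (hlog _ (hx j))).const_mul _
  have hneg : ∀ s : ℝ, 0 < s → (∑ i, ∑ j, c i * c j *
      ((x i + x j) * (1 / (x i + x j + s)) - x i * (1 / (x i + s)) - x j * (1 / (x j + s)))) < 0 := by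
    intro s hs
    set e : ι → ℝ := fun i => c i * (x i / (x i + s)) with he
    have he0 : e ≠ 0 := by
      intro h
      apply hc
      funext i
      have h1 := congrFun h i
      have h2 : x i / (x i + s) ≠ 0 := div_ne_zero (hx i).ne' (add_pos (hx i) hs).ne'
      simpa [he, h2, (hx i).ne', (add_pos (hx i) hs).ne'] using h1
    have h1 := cauchy_pos (fun i => x i + s / 2) (fun i => by have := hx i; positivity)
      (fun i j h => hinj (by simpa using h)) _ e rfl he0
    have key : (∑ i, ∑ j, c i * c j *
      ((x i + x j) * (1 / (x i + x j + s)) - x i * (1 / (x i + s)) - x j * (1 / (x j + s)))) =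
      -((∑ i, e i) ^ 2 + s * ∑ i, ∑ j, e i * e j / (x i + s / 2 + (x j + s / 2))) := by
      rw [sq, Finset.sum_mul_sum, Finset.mul_sum, ← Finset.sum_add_distrib, ← Finset.sum_neg_distrib]
      refine Finset.sum_congr rfl fun i _ => ?_
      rw [Finset.mul_sum, ← Finset.sum_add_distrib, ← Finset.sum_neg_distrib]
      refine Finset.sum_congr rfl fun j _ => ?_
      have e1 : x i + s / 2 + (x j + s / 2) = x i + x j + s := by ring
      have h1 := (add_pos (add_pos (hx i) (hx j)) hs).ne'
      have h2 := (add_pos (hx i) hs).ne'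
      have h3 := (add_pos (hx j) hs).ne'
      rw [e1]
      simp only [he]
      field_simp
      ring
    rw [key]
    nlinarith [sq_nonneg (∑ i, e i), mul_pos hs h1]
  have hanti : StrictAntiOn F (Set.Ici 0) := by
    apply strictAntiOn_of_deriv_neg (convex_Ici 0)
    · intro s hs
      exact (hderiv s hs).continuousAt.continuousWithinAt
    · intro s hs
      rw [interior_Ici] at hs
      rw [(hderiv s (le_of_lt hs)).deriv]
      exact hneg s hs
  have hlim : Filter.Tendsto F Filter.atTop (nhds 0) := by
    have hl : ∀ t u : ℝ, Filter.Tendsto (fun s => Real.log (t + s) - Real.log (u + s)) Filter.atTop (nhds 0) := by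
      intro t u
      have h0 : ∀ t : ℝ, Filter.Tendsto (fun s => Real.log (t + s) - Real.log s) Filter.atTop (nhds 0) := by
        intro t
        simpa [add_comm] using Real.tendsto_log_comp_add_sub_log t
      simpa using (h0 t).sub (h0 u)
    have : F = fun s => ∑ i, ∑ j, c i * c j *
        (x i * (Real.log (x i + x j + s) - Real.log (x i + s))
          + x j * (Real.log (x i + x j + s) - Real.log (x j + s))) := by
      funext s
      simp only [hF]
      refine Finset.sum_congr rfl fun i _ => Finset.sum_congr rfl fun j _ => ?_
      ring
    rw [this]
    have h2 : (0 : ℝ) = ∑ i, ∑ j, c i * c j * (x i * 0 + x j * 0) := by simp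
    rw [h2]
    refine tendsto_finsetSum _ fun i _ => tendsto_finsetSum _ fun j _ => ?_
    exact (((hl _ _).const_mul _).add ((hl _ _).const_mul _)).const_mul _
  have h1 : 0 ≤ F 1 := by
    have h2 : 0 ≤ F 1 - 0 := by
      refine ge_of_tendsto' (x := Filter.atTop) (f := fun s : ℝ => F 1 - F (max s 1)) ?_ ?_
      · exact tendsto_const_nhds.sub (hlim.comp (Filter.tendsto_atTop_mono (fun s => le_max_left s 1) Filter.tendsto_id))
      · intro s
        rw [sub_nonneg]
        exact hanti.antitoneOn (by simp) (by simp) (le_max_right s 1)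
    simpa using h2
  have h0 : F 1 < F 0 := hanti (by simp) (by simp) one_pos
  have : 0 < F 0 := lt_of_le_of_lt h1 h0
  simpa [hF] using this

open Matrix in
theorem powker_posDef {n : ℕ} (x : Fin n → ℝ) (hx : ∀ i, 0 < x i)
    (hinj : Function.Injective x) (r : ℝ) (hr : 0 < r) :
    Matrix.PosDef (Matrix.of fun i j : Fin n => (x i + x j) ^ ((x i + x j) * r)) := by
  set P : Matrix (Fin n) (Fin n) ℝ := Matrix.of fun i j => r * ((x i + x j) * Real.log (x i + x j)
      - x i * Real.log (x i) - x j * Real.log (x j)) with hP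
  have hPpos : P.PosDef := by
    apply Matrix.PosDef.of_dotProduct_mulVec_pos
    · ext i j
      simp only [hP, Matrix.conjTranspose_apply, Matrix.of_apply, star_trivial, add_comm (x i) (x j)]
      ring
    · intro c hc
      have := mul_pos hr (logker_pos x hx hinj c hc)
      convert this using 1
      simp only [dotProduct, mulVec, hP, Finset.mul_sum, Matrix.of_apply, star_trivial]
      refine Finset.sum_congr rfl fun i _ => Finset.sum_congr rfl fun j _ => ?_
      ring
  have hpow : ∀ k : ℕ, (Matrix.of fun i j => P i j ^ k : Matrix (Fin n) (Fin n) ℝ).PosSemidef := by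
    intro k
    induction k with
    | zero =>
      have := Matrix.posSemidef_vecMulVec_self_star (fun _ : Fin n => (1 : ℝ))
      convert this using 1
      ext i j
      simp [vecMulVec]
    | succ k ih =>
      have h := ih.hadamard hPpos.posSemidef
      have h2 : (Matrix.of fun i j => P i j ^ (k + 1) : Matrix (Fin n) (Fin n) ℝ) =
          (Matrix.of fun i j => P i j ^ k) ⊙ P := by
        ext i j
        simp [pow_succ]
      rw [h2]
      exact h
  apply Matrix.PosDef.of_dotProduct_mulVec_pos
  · ext i j
    simp [add_comm (x i) (x j)]
  · intro c hc
    set d : Fin n → ℝ := fun i => c i * Real.exp (r * (x i * Real.log (x i))) with hd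
    have hd0 : d ≠ 0 := by
      intro h
      apply hc
      funext i
      simpa [hd] using congrFun h i
    have e1 : star c ⬝ᵥ (Matrix.of fun i j : Fin n => (x i + x j) ^ ((x i + x j) * r)) *ᵥ c
        = ∑ i, ∑ j, d i * d j * Real.exp (P i j) := by
      simp only [dotProduct, mulVec, Finset.mul_sum, Matrix.of_apply, star_trivial]
      refine Finset.sum_congr rfl fun i _ => Finset.sum_congr rfl fun j _ => ?_
      rw [Real.rpow_def_of_pos (add_pos (hx i) (hx j))]
      have : Real.log (x i + x j) * ((x i + x j) * r) =
        r * (x i * Real.log (x i)) + r * (x j * Real.log (x j)) + P i j := by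
        simp only [hP, Matrix.of_apply]; ring
      rw [this, Real.exp_add, Real.exp_add]
      simp only [hd]
      ring
    rw [e1]
    have hs : HasSum (fun k : ℕ => ∑ i, ∑ j, d i * d j * (P i j ^ k / k.factorial))
        (∑ i, ∑ j, d i * d j * Real.exp (P i j)) := by
      refine hasSum_sum fun i _ => hasSum_sum fun j _ => HasSum.mul_left _ ?_
      rw [Real.exp_eq_exp_ℝ]
      exact NormedSpace.expSeries_div_hasSum_exp (P i j)
    have hnn : ∀ k : ℕ, 0 ≤ ∑ i, ∑ j, d i * d j * (P i j ^ k / k.factorial) := by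
      intro k
      have h := (hpow k).dotProduct_mulVec_nonneg d
      have h2 : ∑ i, ∑ j, d i * d j * (P i j ^ k / k.factorial) =
        (1 / k.factorial) * (star d ⬝ᵥ (Matrix.of fun i j => P i j ^ k) *ᵥ d) := by
        simp only [dotProduct, mulVec, Finset.mul_sum, Matrix.of_apply, star_trivial]
        refine Finset.sum_congr rfl fun i _ => Finset.sum_congr rfl fun j _ => ?_
        ring
      rw [h2]
      positivity
    have h1 : 0 < ∑ i, ∑ j, d i * d j * (P i j ^ 1 / (Nat.factorial 1 : ℝ)) := by
      have h := hPpos.dotProduct_mulVec_pos hd0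
      have h2 : ∑ i, ∑ j, d i * d j * (P i j ^ 1 / (Nat.factorial 1 : ℝ)) = star d ⬝ᵥ P *ᵥ d := by
        simp only [dotProduct, mulVec, Finset.mul_sum, star_trivial]
        refine Finset.sum_congr rfl fun i _ => Finset.sum_congr rfl fun j _ => ?_
        simp
        ring
      rw [h2]
      exact h
    exact lt_of_lt_of_le h1 (le_hasSum hs 1 fun k _ => hnn k)

/-- moving a row to the front -/
theorem det_cons_row {m : ℕ} (T : Fin (m + 1) → Fin (m + 1) → ℝ) (p : Fin (m + 1)) :
    (Matrix.of (Fin.cons (T p) (fun i => T (p.succAbove i)) : Fin (m + 1) → Fin (m + 1) → ℝ)).det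
      = (-1) ^ (p : ℕ) * (Matrix.of T).det := by
  have h : (Fin.cons (T p) (fun i => T (p.succAbove i)) : Fin (m + 1) → Fin (m + 1) → ℝ)
      = T ∘ p.cycleRange.symm := Fin.cons_removeNth_eq_comp_cycleRange_symm T p
  rw [h]
  have h2 := Matrix.det_permute p.cycleRange.symm (Matrix.of T)
  rw [Equiv.Perm.sign_symm, Fin.sign_cycleRange] at h2
  push_cast at h2
  exact h2

/-- Three term Plücker relation. -/
theorem plucker_pos {m : ℕ} (B : Fin (m + 3) → Fin (m + 2) → ℝ)
    (h0 : 0 < (Matrix.of fun i j => B (Fin.succ i) j).det)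
    (hl : 0 < (Matrix.of fun i j => B (Fin.castSucc i) j).det)
    (hB : ∀ e : Fin (m + 1) → Fin (m + 3), StrictMono e →
      0 < (Matrix.of fun i j : Fin (m + 1) => B (e i) j.castSucc).det)
    (p : Fin (m + 1)) :
    0 < (Matrix.of fun i j => B (p.castSucc.succ.succAbove i) j).det := by
  -- rows strictly between the first and last
  set T : Fin (m + 1) → Fin (m + 1) → ℝ := fun i j => B i.castSucc.succ j.castSucc with hT
  set L : (Fin (m + 1) → ℝ) → ℝ := fun v =>
    (Matrix.of (Fin.cons v (fun i => T (p.succAbove i)) : Fin (m + 1) → Fin (m + 1) → ℝ)).det with hL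
  set y : Fin (m + 1) → ℝ := fun j => (-1) ^ (j : ℕ) *
    (Matrix.of fun i k => T (p.succAbove i) (j.succAbove k)).det with hy
  have hLy : ∀ v, L v = ∑ j, v j * y j := by
    intro v
    simp only [hL]
    rw [Matrix.det_succ_row_zero]
    refine Finset.sum_congr rfl fun j _ => ?_
    simp only [hy, Matrix.of_apply, Fin.cons_zero]
    have : (Matrix.of (Fin.cons v (fun i => T (p.succAbove i)) :
        Fin (m + 1) → Fin (m + 1) → ℝ)).submatrix Fin.succ j.succAbove
        = Matrix.of fun i k => T (p.succAbove i) (j.succAbove k) := by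
      ext i k
      simp
    rw [this]
    ring
  set ℓ : Fin (m + 3) → ℝ := fun a => L (fun j => B a j.castSucc) with hℓ
  -- the big determinant vanishes
  set A : Matrix (Fin (m + 3)) (Fin (m + 3)) ℝ :=
    Matrix.of fun i => (Fin.cons (ℓ i) (B i) : Fin (m + 3) → ℝ) with hA
  have hdet : A.det = 0 := by
    rw [← Matrix.exists_mulVec_eq_zero_iff]
    refine ⟨Fin.cons (-1) (Fin.snoc y 0), ?_, ?_⟩
    · intro h
      have := congrFun h 0
      simp at this
    · funext i
      simp only [Matrix.mulVec, dotProduct, hA, Matrix.of_apply, Pi.zero_apply]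
      rw [Fin.sum_univ_succ, Fin.sum_univ_castSucc]
      simp [hℓ, hLy]
  rw [Matrix.det_succ_column_zero, Fin.sum_univ_succ, Fin.sum_univ_castSucc,
    Finset.sum_eq_single p] at hdet
  rotate_left
  · intro i _ hi
    obtain ⟨k, hk⟩ := Fin.exists_succAbove_eq hi
    have : ℓ i.castSucc.succ = 0 := by
      simp only [hℓ, hL]
      apply Matrix.det_zero_of_row_eq (i := 0) (j := k.succ) (Fin.succ_ne_zero k).symm
      funext j
      simp [hT, hk]
    simp [hA, this]
  · simp
  have hsub : ∀ i : Fin (m + 3), A.submatrix i.succAbove Fin.succ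
      = Matrix.of fun a j => B (i.succAbove a) j := by
    intro i
    ext a j
    simp [hA]
  have hAi : ∀ i, A i 0 = ℓ i := by intro i; simp [hA]
  simp only [hsub, hAi] at hdet
  have e0 : (Matrix.of fun a j => B ((0 : Fin (m + 3)).succAbove a) j).det
      = (Matrix.of fun i j => B (Fin.succ i) j).det := by simp
  have el : (Matrix.of fun a j => B ((Fin.last (m + 1)).succ.succAbove a) j).det
      = (Matrix.of fun i j => B (Fin.castSucc i) j).det := by simp
  rw [e0, el] at hdet
  -- the three values of the functional
  have v0 : 0 < ℓ 0 := by
    have := hB (Fin.cons 0 (fun i => (p.succAbove i).castSucc.succ)) (by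
      rw [Fin.strictMono_cons]
      exact ⟨fun j => Fin.succ_pos _, fun a b h => by simpa using h⟩)
    convert this using 1
    simp only [hℓ, hL]
    congr 1
    ext i j
    refine Fin.cases ?_ (fun i => ?_) i <;> simp [hT]
  have vp : ℓ p.castSucc.succ = (-1) ^ (p : ℕ) * (Matrix.of T).det :=
    det_cons_row T p
  have hTpos : 0 < (Matrix.of T).det := hB (fun i => i.castSucc.succ) (by
    intro a b h; simpa using h)
  have vl : ∃ w, 0 < w ∧ ℓ (Fin.last (m + 1)).succ = (-1) ^ m * w := by
    refine ⟨_, hB (Fin.snoc (fun i => (p.succAbove i).castSucc.succ) (Fin.last (m + 2))) ?_, ?_⟩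
    · intro a b
      refine Fin.lastCases ?_ (fun b => ?_) b <;> refine Fin.lastCases ?_ (fun a => ?_) a
      · intro h; exact absurd h (lt_irrefl _)
      · intro _
        simp only [Fin.snoc_castSucc, Fin.snoc_last]
        rw [← Fin.succ_last, Fin.succ_lt_succ_iff]
        exact Fin.castSucc_lt_last _
      · intro h
        exact absurd h (not_lt.2 (Fin.le_last _))
      · intro h
        simpa using h
    · have := det_cons_row (fun i j => B ((Fin.snoc (fun i => (p.succAbove i).castSucc.succ)
        (Fin.last (m + 2)) : Fin (m + 1) → Fin (m + 3)) i) (Fin.castSucc j)) (Fin.last m)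
      simp only [Fin.val_last] at this
      rw [← this]
      simp only [hℓ, hL]
      congr 1
      ext i j
      refine Fin.cases ?_ (fun i => ?_) i <;> simp [hT]
  obtain ⟨w, hw, vl⟩ := vl
  rw [vp, vl] at hdet
  set D := (Matrix.of fun i j => B (p.castSucc.succ.succAbove i) j).det with hD
  set D0 := (Matrix.of fun i j => B (Fin.succ i) j).det
  set D1 := (Matrix.of fun i j => B (Fin.castSucc i) j).det
  have key : (Matrix.of T).det * D = ℓ 0 * D0 + w * D1 := by
    have s1 : ((-1 : ℝ) ^ (p : ℕ)) * (-1) ^ (p : ℕ) = 1 := by rw [← mul_pow]; simp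
    have s2 : ((-1 : ℝ) ^ m) * (-1) ^ m = 1 := by rw [← mul_pow]; simp
    simp only [Fin.val_zero, Fin.val_succ, Fin.val_castSucc, Fin.val_last, pow_zero, pow_succ] at hdet
    linear_combination (-1) * hdet - (Matrix.of T).det * D * s1 + w * D1 * s2
  have : 0 < (Matrix.of T).det * D := by rw [key]; positivity
  exact (pos_iff_pos_of_mul_pos this).1 hTpos

theorem fekete_rows {m : ℕ} (A : ℕ → Fin (m + 2) → ℝ)
    (hA : ∀ e : Fin (m + 1) → ℕ, StrictMono e →
      0 < (Matrix.of fun i j : Fin (m + 1) => A (e i) j.castSucc).det)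
    (hc : ∀ a : ℕ, 0 < (Matrix.of fun i j : Fin (m + 2) => A (a + i) j).det) :
    ∀ (N : ℕ) (f : Fin (m + 2) → ℕ), StrictMono f → f (Fin.last _) - f 0 ≤ N →
      0 < (Matrix.of fun i j => A (f i) j).det := by
  intro N
  induction N with
  | zero =>
    intro f hf h
    have : f 0 < f (Fin.last _) := hf (Fin.last_pos)
    omega
  | succ N ih =>
    intro f hf hN
    by_cases hcont : ∀ i : Fin (m + 1), f i.succ = f i.castSucc + 1
    · have : ∀ i, f i = f 0 + i := by
        intro i
        induction i using Fin.induction with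
        | zero => simp
        | succ i ihi => rw [hcont, ihi]; simp; ring
      have h2 := hc (f 0)
      have h3 : (Matrix.of fun i j => A (f i) j) = Matrix.of fun i j : Fin (m + 2) => A (f 0 + i) j := by
        ext i j
        simp only [Matrix.of_apply]
        rw [this i]
      rw [h3]
      exact h2
    · push Not at hcont
      obtain ⟨p, hp⟩ := hcont
      have hlt : f p.castSucc < f p.succ := hf (Fin.castSucc_lt_succ)
      set g : Fin (m + 3) → ℕ := Fin.insertNth (α := fun _ => ℕ) p.castSucc.succ (f p.castSucc + 1) f with hg
      have hgm : StrictMono g := Fin.strictMono_insertNth hf p _ (by omega) (by omega)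
      have hgf : ∀ i, g (p.castSucc.succ.succAbove i) = f i := by
        intro i; simp [hg]
      have g0 : g 0 = f 0 := by
        rw [← hgf 0]
        congr 1
      have gl : g (Fin.last _) = f (Fin.last _) := by
        rw [← hgf (Fin.last _)]
        congr 1
        symm
        apply Fin.succAbove_ne_last_last
        rw [← Fin.succ_last]
        intro h
        exact (Fin.castSucc_lt_last p).ne (Fin.succ_injective _ h)
      have h1 : g 0 < g 1 := hgm (by simp)
      have h1' : g 1 ≤ g (Fin.last _) := hgm.monotone (Fin.le_last _)
      have h2 : g (Fin.last _).castSucc < g (Fin.last _) := hgm (Fin.castSucc_lt_last _)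
      have := plucker_pos (fun i => A (g i))
        (ih (g ∘ Fin.succ) (hgm.comp (Fin.strictMono_succ)) (by
          have e1 : (g ∘ Fin.succ) (Fin.last (m + 1)) = g (Fin.last _) := rfl
          have e2 : (g ∘ Fin.succ) (0 : Fin (m + 2)) = g 1 := rfl
          rw [e1, e2]
          omega))
        (ih (g ∘ Fin.castSucc) (hgm.comp (Fin.strictMono_castSucc)) (by
          have e1 : (g ∘ Fin.castSucc) (Fin.last (m + 1)) = g (Fin.last (m + 1)).castSucc := rfl
          have e2 : (g ∘ Fin.castSucc) (0 : Fin (m + 2)) = g 0 := rfl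
          rw [e1, e2]
          omega))
        (fun e he => hA (g ∘ e) (hgm.comp he)) p
      simpa [hgf] using this

theorem fekete (H : ℕ → ℕ → ℝ)
    (hc : ∀ k a b : ℕ, 0 < (Matrix.of fun i j : Fin k => H (a + i) (b + j)).det) :
    ∀ (k : ℕ) (f g : Fin k → ℕ), StrictMono f → StrictMono g →
      0 < (Matrix.of fun i j : Fin k => H (f i) (g j)).det := by
  intro k
  induction k with
  | zero => intro f g _ _; simp
  | succ k ih =>
    rcases k with _ | m
    · intro f g _ _
      have := hc 1 (f 0) (g 0)
      simpa using this
    · have hrow : ∀ (f : Fin (m + 2) → ℕ) (b : ℕ), StrictMono f →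
          0 < (Matrix.of fun i j : Fin (m + 2) => H (f i) (b + j)).det := by
        intro f b hf
        refine fekete_rows (fun i j => H i (b + j)) ?_ ?_ _ f hf le_rfl
        · intro e he
          exact ih e (fun j => b + (j.castSucc : ℕ)) he (by intro i j h; simpa using h)
        · intro a
          exact hc (m + 2) a b
      intro f g hf hg
      rw [← Matrix.det_transpose]
      refine fekete_rows (fun j i => H (f i) j) ?_ ?_ _ g hg le_rfl
      · intro e he
        rw [← Matrix.det_transpose]
        exact ih (f ∘ Fin.castSucc) e (hf.comp Fin.strictMono_castSucc) he
      · intro b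
        rw [← Matrix.det_transpose]
        exact hrow f b hf

end Aux

/-- For positive rationals `q₁ < … < qₙ` and real `r > 0`, the entrywise power
`Q^{∘r}` of `Q = [(qᵢ + qⱼ)^(qᵢ + qⱼ)]` is positive definite and strictly totally
positive. -/
theorem stmt_15 (n : ℕ) (q : Fin n → ℚ) (hpos : ∀ i, 0 < q i) (hmono : StrictMono q)
    (r : ℝ) (hr : 0 < r) :
    Matrix.PosDef (Matrix.of fun i j : Fin n =>
        ((q i + q j : ℚ) : ℝ) ^ (((q i + q j : ℚ) : ℝ) * r)) ∧
      ∀ (m : ℕ) (f g : Fin m → Fin n), StrictMono f → StrictMono g →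
        0 < ((Matrix.of fun i j : Fin n =>
          ((q i + q j : ℚ) : ℝ) ^ (((q i + q j : ℚ) : ℝ) * r)).submatrix f g).det := by
  refine ⟨powker_posDef (fun i => ((q i : ℚ) : ℝ)) (fun i => by exact_mod_cast hpos i)
    (fun i j h => hmono.injective (Rat.cast_injective (α := ℝ) h)) r hr |> fun h => by simpa using h, ?_⟩
  -- common denominator
  obtain ⟨N, hN, k, hk⟩ : ∃ (N : ℕ) (_ : 0 < N) (k : Fin n → ℕ), ∀ i, q i = ((k i : ℚ) + 1) / N := by
    refine ⟨∏ i, (q i).den, Finset.prod_pos fun i _ => (q i).den_pos,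
      fun i => (q i).num.toNat * (∏ j ∈ Finset.univ.erase i, (q j).den) - 1, fun i => ?_⟩
    have h1 : 0 < (q i).num := Rat.num_pos.2 (hpos i)
    have h2 : 0 < ∏ j ∈ Finset.univ.erase i, (q j).den := Finset.prod_pos fun i _ => (q i).den_pos
    have h3 : 0 < (q i).num.toNat := by omega
    have h4 : 1 ≤ (q i).num.toNat * (∏ j ∈ Finset.univ.erase i, (q j).den) := Nat.mul_pos h3 h2
    have h5 : (((q i).num.toNat : ℕ) : ℚ) = ((q i).num : ℚ) := by
      exact_mod_cast Int.toNat_of_nonneg h1.le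
    rw [← Finset.mul_prod_erase Finset.univ (fun j => (q j).den) (Finset.mem_univ i)]
    rw [Nat.cast_sub h4, Nat.cast_mul, Nat.cast_mul, h5]
    have h6 : ((∏ j ∈ Finset.univ.erase i, (q j).den : ℕ) : ℚ) ≠ 0 := by exact_mod_cast h2.ne'
    rw [Nat.cast_one, sub_add_cancel, mul_div_mul_right _ _ h6, Rat.num_div_den]
  have hNR : (0 : ℝ) < N := by exact_mod_cast hN
  have hkm : StrictMono k := by
    intro i j h
    have h1 := hmono h
    have h2 : (0 : ℚ) < N := by exact_mod_cast hN
    rw [hk i, hk j, div_lt_div_iff_of_pos_right h2] at h1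
    have h3 : (k i : ℚ) < k j := by linarith
    exact_mod_cast h3
  intro m f g hf hg
  have hmain := fekete (fun a b => (((a : ℝ) + 1) / N + ((b : ℝ) + 1) / N) ^
      ((((a : ℝ) + 1) / N + ((b : ℝ) + 1) / N) * r)) (by
    intro l a b
    have h := (powker_posDef (fun i : Fin l => ((a : ℝ) + b + 2 + 2 * (i : ℕ)) / (2 * N))
      (fun i => by positivity) (fun i j h => by
        have h2 : (2 * (N : ℝ)) ≠ 0 := by positivity
        have h3 := (div_left_inj' h2).1 h
        have h4 : ((i : ℕ) : ℝ) = ((j : ℕ) : ℝ) := by linarith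
        exact Fin.ext (by exact_mod_cast h4)) r hr).det_pos
    have e : ∀ i j : Fin l, ((a : ℝ) + b + 2 + 2 * (i : ℕ)) / (2 * N) +
        ((a : ℝ) + b + 2 + 2 * (j : ℕ)) / (2 * N) =
        (((a + (i : ℕ) : ℕ) : ℝ) + 1) / N + (((b + (j : ℕ) : ℕ) : ℝ) + 1) / N := by
      intro i j
      push_cast
      field_simp
      ring
    simp only [e] at h
    exact h) m (k ∘ f) (k ∘ g) (hkm.comp hf) (hkm.comp hg)
  have e : ∀ i, ((q i : ℚ) : ℝ) = ((k i : ℝ) + 1) / N := by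
    intro i
    rw [hk i]
    push_cast
    rfl
  have hM : ((Matrix.of fun i j : Fin n =>
          ((q i + q j : ℚ) : ℝ) ^ (((q i + q j : ℚ) : ℝ) * r)).submatrix f g) =
      Matrix.of fun i j : Fin m => (((((k ∘ f) i : ℕ) : ℝ) + 1) / N + ((((k ∘ g) j : ℕ) : ℝ) + 1) / N) ^
      ((((((k ∘ f) i : ℕ) : ℝ) + 1) / N + ((((k ∘ g) j : ℕ) : ℝ) + 1) / N) * r) := by
    ext i j
    simp only [Matrix.submatrix_apply, Matrix.of_apply, Rat.cast_add, e, Function.comp]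
  rw [hM]
  exact hmain
end

section
/- Let n ≥ 1 and let K be the n×n matrix with (i,j) entry (i+j)^(i+j) for 1 ≤ i, j ≤ n. Then K is positive definite: ⟨x, Kx⟩ > 0 for every nonzero vector x ∈ ℝ^n. -/
open Filter Topology Finset

/-- The Cauchy kernel `1/(i+j+s)` is strictly positive definite. -/
lemma cauchy_pos_s18 {n : ℕ} (x : Fin n → ℝ) (hx : x ≠ 0) (s : ℝ) (hs : 0 ≤ s) :
    0 < ∑ i, ∑ j, x i * x j * (((i : ℕ) + 1 + ((j : ℕ) + 1) : ℝ) + s)⁻¹ := by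
  have hc : Continuous fun u : ℝ => u ^ (s + 1) := Real.continuous_rpow_const (by linarith)
  have key : ∑ i, ∑ j, x i * x j * (((i : ℕ) + 1 + ((j : ℕ) + 1) : ℝ) + s)⁻¹
      = ∫ u in (0 : ℝ)..1, (∑ i, x i * u ^ (i : ℕ)) ^ 2 * u ^ (s + 1) := by
    have h1 : ∀ u : ℝ, (∑ i, x i * u ^ (i : ℕ)) ^ 2 * u ^ (s + 1)
        = ∑ i, ∑ j, x i * x j * (u ^ ((i : ℕ) + (j : ℕ)) * u ^ (s + 1)) := by
      intro u
      rw [sq, Finset.sum_mul_sum, Finset.sum_mul]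
      refine Finset.sum_congr rfl fun i _ => ?_
      rw [Finset.sum_mul]
      refine Finset.sum_congr rfl fun j _ => ?_
      rw [pow_add]; ring
    simp_rw [h1]
    rw [intervalIntegral.integral_finsetSum]
    swap
    · intro i _
      apply Continuous.intervalIntegrable
      fun_prop
    refine Finset.sum_congr rfl fun i _ => ?_
    rw [intervalIntegral.integral_finsetSum]
    swap
    · intro j _
      apply Continuous.intervalIntegrable
      fun_prop
    refine Finset.sum_congr rfl fun j _ => ?_
    rw [intervalIntegral.integral_const_mul]
    congr 1
    have h2 : ∫ u in (0 : ℝ)..1, u ^ ((i : ℕ) + (j : ℕ)) * u ^ (s + 1)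
        = ∫ u in (0 : ℝ)..1, u ^ (((i : ℕ) : ℝ) + (j : ℕ) + s + 1) := by
      apply intervalIntegral.integral_congr
      intro u hu
      rw [Set.uIcc_of_le zero_le_one] at hu
      show u ^ ((i : ℕ) + (j : ℕ)) * u ^ (s + 1) = u ^ (((i : ℕ) : ℝ) + (j : ℕ) + s + 1)
      rw [← Real.rpow_natCast, ← Real.rpow_add_of_nonneg hu.1 (by positivity) (by positivity)]
      push_cast
      ring_nf
    have h0 : (0 : ℝ) ≤ ((i : ℕ) : ℝ) + (j : ℕ) + s := by positivity
    rw [h2, integral_rpow (Or.inl (by linarith)), Real.one_rpow,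
      Real.zero_rpow (by linarith), sub_zero, one_div]
    ring_nf
  rw [key]
  have hex : ∃ u ∈ Set.Ioo (0 : ℝ) 1, ∑ i, x i * u ^ (i : ℕ) ≠ 0 := by
    by_contra! hcon
    apply hx
    set P : Polynomial ℝ := ∑ i : Fin n, Polynomial.C (x i) * Polynomial.X ^ (i : ℕ) with hP
    have hP0 : P = 0 := by
      apply Polynomial.eq_zero_of_infinite_isRoot
      apply (Set.Ioo_infinite (zero_lt_one (α := ℝ))).mono
      intro u hu
      have := hcon u hu
      simpa [Polynomial.IsRoot, hP, Polynomial.eval_finsetSum] using this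
    funext k
    have := congrArg (fun p => Polynomial.coeff p (k : ℕ)) hP0
    simpa [hP, Polynomial.finsetSum_coeff, Polynomial.coeff_X_pow, Fin.val_inj] using this
  obtain ⟨u, hu, hne⟩ := hex
  apply intervalIntegral.integral_pos zero_lt_one
  · apply Continuous.continuousOn
    fun_prop
  · intro v hv
    have := Real.rpow_nonneg hv.1.le (s + 1)
    positivity
  · refine ⟨u, ⟨hu.1.le, hu.2.le⟩, ?_⟩
    have := Real.rpow_pos_of_pos hu.1 (s + 1)
    positivity

lemma pos_of_deriv_neg {f f' : ℝ → ℝ} (hf : ∀ s, 0 ≤ s → HasDerivAt f (f' s) s)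
    (hf' : ∀ s, 0 ≤ s → f' s < 0) (hl : Tendsto f atTop (𝓝 0)) : ∀ s, 0 ≤ s → 0 < f s := by
  have hanti : StrictAntiOn f (Set.Ici 0) := by
    apply strictAntiOn_of_deriv_neg (convex_Ici 0)
    · intro s hs
      exact (hf s hs).continuousAt.continuousWithinAt
    · intro s hs
      have hs' : (0 : ℝ) ≤ s := interior_subset hs
      rw [(hf s hs').deriv]
      exact hf' s hs'
  intro s hs
  have h1 : f (s + 1) < f s := hanti hs (show (0 : ℝ) ≤ s + 1 by linarith) (by linarith)
  have h2 : 0 ≤ f (s + 1) := by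
    apply le_of_tendsto hl
    filter_upwards [eventually_ge_atTop (s + 1)] with t ht
    exact hanti.antitoneOn (show (0 : ℝ) ≤ s + 1 by linarith)
      (show (0 : ℝ) ≤ t by linarith) ht
  linarith

lemma sum_affine {n : ℕ} (x : Fin n → ℝ) (h0 : ∑ i, x i = 0) (a : Fin n → ℝ) (A B : ℝ) :
    ∑ i, ∑ j, x i * x j * (A + B * (a i + a j)) = 0 := by
  have h : ∀ i j, x i * x j * (A + B * (a i + a j))
      = (x i * A + B * x i * a i) * x j + B * x i * (x j * a j) := by intros; ring
  simp_rw [h, Finset.sum_add_distrib, ← Finset.mul_sum, h0, mul_zero, Finset.sum_const_zero,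
    ← Finset.sum_mul, ← Finset.mul_sum, h0]
  simp

lemma tendsto_log_shift (m : ℝ) :
    Tendsto (fun s : ℝ => Real.log (1 + m / s)) atTop (𝓝 0) := by
  have h : Tendsto (fun s : ℝ => 1 + m / s) atTop (𝓝 (1 + 0)) :=
    tendsto_const_nhds.add (tendsto_const_nhds.div_atTop tendsto_id)
  rw [add_zero] at h
  simpa using h.log one_ne_zero

lemma log_shift {m s : ℝ} (hm : 0 < m) (hs : 0 < s) :
    Real.log (m + s) = Real.log s + Real.log (1 + m / s) := by
  rw [← Real.log_mul hs.ne' (by positivity)]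
  congr 1
  field_simp
  ring

/-- The kernel `(i+j) log (i+j)` is strictly conditionally positive definite. -/
lemma cond_pos {n : ℕ} (x : Fin n → ℝ) (hx : x ≠ 0) (h0 : ∑ i, x i = 0) :
    0 < ∑ i, ∑ j, x i * x j * (((i : ℕ) + 1 + ((j : ℕ) + 1) : ℝ) *
      Real.log ((i : ℕ) + 1 + ((j : ℕ) + 1) : ℝ)) := by
  set a : Fin n → ℝ := fun i => ((i : ℕ) : ℝ) + 1 with ha
  have hapos : ∀ i, 0 < a i := fun i => by simp only [ha]; positivity
  have hm : ∀ i j, 0 < a i + a j := fun i j => add_pos (hapos i) (hapos j)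
  -- first derivative is negative
  have hQ1 : ∀ s, 0 ≤ s →
      0 < -∑ i, ∑ j, x i * x j * (Real.log (a i + a j + s) + 1) := by
    apply pos_of_deriv_neg (f' := fun s => -∑ i, ∑ j, x i * x j * (a i + a j + s)⁻¹)
    · intro s hs
      apply HasDerivAt.neg
      apply HasDerivAt.fun_sum
      intro i _
      apply HasDerivAt.fun_sum
      intro j _
      apply HasDerivAt.const_mul
      apply HasDerivAt.add_const
      have h1 : HasDerivAt (fun s : ℝ => a i + a j + s) 1 s := (hasDerivAt_id s).const_add _
      have := h1.log (by have := hm i j; positivity)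
      simpa using this
    · intro s hs
      have := cauchy_pos_s18 x hx s hs
      simp only [ha]
      linarith
    · have hlim : Tendsto (fun s : ℝ => -∑ i, ∑ j, x i * x j * Real.log (1 + (a i + a j) / s))
          atTop (𝓝 (-∑ i, ∑ j, x i * x j * 0)) := by
        apply Tendsto.neg
        refine tendsto_finsetSum _ fun i _ => tendsto_finsetSum _ fun j _ => ?_
        exact (tendsto_log_shift _).const_mul _
      have hz : (-∑ i, ∑ j, x i * x j * 0 : ℝ) = 0 := by simp
      rw [hz] at hlim
      refine hlim.congr' ?_
      filter_upwards [eventually_gt_atTop 0] with s hs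
      congr 1
      rw [← sub_eq_zero, ← neg_eq_zero, ← sum_affine x h0 a (Real.log s + 1) 0,
        ← Finset.sum_sub_distrib, ← Finset.sum_neg_distrib]
      refine Finset.sum_congr rfl fun i _ => ?_
      rw [← Finset.sum_sub_distrib, ← Finset.sum_neg_distrib]
      refine Finset.sum_congr rfl fun j _ => ?_
      rw [log_shift (hm i j) hs]
      ring
  have hQ : ∀ s, 0 ≤ s →
      0 < ∑ i, ∑ j, x i * x j * ((a i + a j + s) * Real.log (a i + a j + s)) := by
    apply pos_of_deriv_neg
      (f' := fun s => ∑ i, ∑ j, x i * x j * (Real.log (a i + a j + s) + 1))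
    · intro s hs
      apply HasDerivAt.fun_sum
      intro i _
      apply HasDerivAt.fun_sum
      intro j _
      apply HasDerivAt.const_mul
      have h1 : HasDerivAt (fun s : ℝ => a i + a j + s) 1 s := (hasDerivAt_id s).const_add _
      have h2 := Real.hasDerivAt_mul_log (x := a i + a j + s) (by have := hm i j; positivity)
      have := h2.comp s h1
      simpa [Function.comp_def] using this
    · intro s hs
      have := hQ1 s hs
      linarith
    · have hlim : Tendsto (fun s : ℝ => ∑ i, ∑ j, x i * x j *
          (s * Real.log (1 + (a i + a j) / s) + (a i + a j) * Real.log (1 + (a i + a j) / s)))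
          atTop (𝓝 (∑ i, ∑ j, x i * x j * ((a i + a j) + (a i + a j) * 0))) := by
        refine tendsto_finsetSum _ fun i _ => tendsto_finsetSum _ fun j _ => ?_
        exact ((Real.tendsto_mul_log_one_add_div_atTop _).add
          ((tendsto_log_shift _).const_mul _)).const_mul _
      have hz : ∑ i, ∑ j, x i * x j * ((a i + a j) + (a i + a j) * 0) = 0 := by
        refine Eq.trans ?_ (sum_affine x h0 a 0 1)
        refine Finset.sum_congr rfl fun i _ => Finset.sum_congr rfl fun j _ => ?_
        ring
      rw [hz] at hlim
      refine hlim.congr' ?_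
      filter_upwards [eventually_gt_atTop 0] with s hs
      rw [← sub_eq_zero, ← neg_eq_zero, ← sum_affine x h0 a (s * Real.log s) (Real.log s),
        ← Finset.sum_sub_distrib, ← Finset.sum_neg_distrib]
      refine Finset.sum_congr rfl fun i _ => ?_
      rw [← Finset.sum_sub_distrib, ← Finset.sum_neg_distrib]
      refine Finset.sum_congr rfl fun j _ => ?_
      rw [log_shift (hm i j) hs]
      ring
  simpa using hQ 0 le_rfl

lemma quad_form {n : ℕ} (M : Matrix (Fin n) (Fin n) ℝ) (x : Fin n → ℝ) :
    star x ⬝ᵥ (M.mulVec x) = ∑ i, ∑ j, x i * x j * M i j := by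
  simp only [dotProduct, Matrix.mulVec, Finset.mul_sum, star_trivial]
  refine Finset.sum_congr rfl fun i _ => Finset.sum_congr rfl fun j _ => ?_
  ring

lemma hadamard_pow {n : ℕ} {g : Matrix (Fin n) (Fin n) ℝ} (hg : g.PosSemidef) (k : ℕ) :
    (Matrix.of fun i j => g i j ^ k).PosSemidef := by
  induction k with
  | zero =>
    have : (Matrix.of fun i j => g i j ^ 0) = Matrix.vecMulVec (fun _ => (1 : ℝ)) (star fun _ => (1 : ℝ)) := by
      ext i j
      simp [Matrix.vecMulVec_apply]
    rw [this]
    exact Matrix.posSemidef_vecMulVec_self_star _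
  | succ k ih =>
    have : (Matrix.of fun i j => g i j ^ (k + 1)) =
        Matrix.hadamard (Matrix.of fun i j => g i j ^ k) g := by
      ext i j
      simp [pow_succ]
    rw [this]
    exact ih.hadamard hg

lemma exp_bound {n : ℕ} {g : Matrix (Fin n) (Fin n) ℝ} (hg : g.PosSemidef) (x : Fin n → ℝ) :
    (∑ i, x i) ^ 2 + ∑ i, ∑ j, x i * x j * g i j ≤ ∑ i, ∑ j, x i * x j * Real.exp (g i j) := by
  have hs : HasSum (fun k : ℕ => ∑ i, ∑ j, x i * x j * (g i j ^ k / (k.factorial : ℝ)))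
      (∑ i, ∑ j, x i * x j * Real.exp (g i j)) := by
    refine hasSum_sum fun i _ => hasSum_sum fun j _ => ?_
    apply HasSum.mul_left
    rw [Real.exp_eq_exp_ℝ]
    exact NormedSpace.expSeries_div_hasSum_exp (g i j)
  have hle := sum_le_hasSum (Finset.range 2) (fun k _ => ?_) hs
  · rw [Finset.sum_range_succ, Finset.sum_range_one] at hle
    refine le_trans (le_of_eq ?_) hle
    rw [sq, Finset.sum_mul_sum]
    simp
  · have h1 := (hadamard_pow hg k).dotProduct_mulVec_nonneg x
    rw [quad_form] at h1
    have h2 : ∑ i, ∑ j, x i * x j * (g i j ^ k / (k.factorial : ℝ))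
        = (∑ i, ∑ j, x i * x j * (Matrix.of fun i j => g i j ^ k) i j) / (k.factorial : ℝ) := by
      rw [Finset.sum_div]
      refine Finset.sum_congr rfl fun i _ => ?_
      rw [Finset.sum_div]
      refine Finset.sum_congr rfl fun j _ => ?_
      simp only [Matrix.of_apply]
      ring
    rw [h2]
    positivity

/-- The matrix `[(i+j)^(i+j)]` (indices running from 1 to n) is positive
definite. -/
theorem stmt_18 (n : ℕ) (hn : 1 ≤ n) :
    Matrix.PosDef (Matrix.of fun i j : Fin n =>
      (((((i : ℕ) + 1) + ((j : ℕ) + 1)) ^ (((i : ℕ) + 1) + ((j : ℕ) + 1)) : ℕ) : ℝ)) := by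
  set F : Fin n → Fin n → ℝ := fun i j => ((i : ℕ) + 1 + ((j : ℕ) + 1) : ℝ) *
      Real.log ((i : ℕ) + 1 + ((j : ℕ) + 1) : ℝ) with hF
  have hsymm : ∀ i j, F i j = F j i := fun i j => by
    simp only [hF]; rw [add_comm ((i : ℕ) + 1 : ℝ)]
  have hK : ∀ i j : Fin n, (((((i : ℕ) + 1) + ((j : ℕ) + 1)) ^
      (((i : ℕ) + 1) + ((j : ℕ) + 1)) : ℕ) : ℝ) = Real.exp (F i j) := by
    intro i j
    have h : (0 : ℝ) < ((i : ℕ) + 1 + ((j : ℕ) + 1) : ℝ) := by positivity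
    simp only [hF]
    rw [mul_comm, ← Real.rpow_def_of_pos h]
    rw [Nat.cast_pow, ← Real.rpow_natCast]
    push_cast
    rfl
  let o : Fin n := ⟨0, hn⟩
  let g : Matrix (Fin n) (Fin n) ℝ := Matrix.of fun i j => F i j - F i o - F o j + F o o
  -- quadratic form of g
  have hgq : ∀ y : Fin n → ℝ, ∑ i, ∑ j, y i * y j * g i j =
      ∑ i, ∑ j, (y i - (∑ k, y k) * (Pi.single o 1 : Fin n → ℝ) i) *
        (y j - (∑ k, y k) * (Pi.single o 1 : Fin n → ℝ) j) * F i j := by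
    intro y
    have e : ∀ S : ℝ, ∀ i j, (y i - S * (Pi.single o 1 : Fin n → ℝ) i) *
        (y j - S * (Pi.single o 1 : Fin n → ℝ) j) * F i j
        = y i * y j * F i j - (y i * S * F i j) * (Pi.single o 1 : Fin n → ℝ) j
          - (Pi.single o 1 : Fin n → ℝ) i * (S * y j * F i j)
          + (Pi.single o 1 : Fin n → ℝ) i * ((S * S * F i j) * (Pi.single o 1 : Fin n → ℝ) j) := by
      intros; ring
    have e2 : ∀ i j, y i * y j * g i j = y i * y j * F i j - (y i * F i o) * y j
        - y i * (y j * F o j) + y i * (y j * F o o) := by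
      intro i j; simp only [g, Matrix.of_apply]; ring
    simp_rw [e, e2, Finset.sum_add_distrib, Finset.sum_sub_distrib, ← Finset.mul_sum]
    simp only [Pi.single_apply, mul_ite, ite_mul, mul_one, one_mul, mul_zero, zero_mul,
      Finset.sum_ite_eq', Finset.mem_univ, if_true, ← Finset.sum_mul, ← Finset.mul_sum, mul_assoc]
    have e3 : ∑ i, y i * (F i o * ∑ j, y j) = ∑ i, y i * ((∑ j, y j) * F i o) :=
      Finset.sum_congr rfl fun i _ => by ring
    rw [e3]
  have hz0 : ∀ y : Fin n → ℝ, ∑ i, (y i - (∑ k, y k) * (Pi.single o 1 : Fin n → ℝ) i) = 0 := by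
    intro y
    rw [Finset.sum_sub_distrib, ← Finset.mul_sum]
    simp
  have hgnn : ∀ y : Fin n → ℝ, 0 ≤ ∑ i, ∑ j, y i * y j * g i j := by
    intro y
    rw [hgq]
    by_cases hz : (fun i => y i - (∑ k, y k) * (Pi.single o 1 : Fin n → ℝ) i) = 0
    · have hz' : ∀ i, y i - (∑ k, y k) * (Pi.single o 1 : Fin n → ℝ) i = 0 := fun i => congrFun hz i
      simp [hz']
    · exact (cond_pos _ hz (hz0 y)).le
  have hg : g.PosSemidef := by
    apply Matrix.PosSemidef.of_dotProduct_mulVec_nonneg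
    · ext i j
      simp only [g, Matrix.conjTranspose_apply, Matrix.of_apply, star_trivial]
      rw [hsymm j i, hsymm j o, hsymm o i]; ring
    · intro y
      rw [quad_form]
      exact hgnn y
  apply Matrix.PosDef.of_dotProduct_mulVec_pos
  · ext i j
    simp only [Matrix.conjTranspose_apply, Matrix.of_apply, star_trivial]
    rw [add_comm]
  intro x hx
  rw [quad_form]
  let c : Fin n → ℝ := fun i => F i o - F o o / 2
  let y : Fin n → ℝ := fun i => x i * Real.exp (c i)
  have hy : y ≠ 0 := by
    intro h
    apply hx
    funext i
    have := congrFun h i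
    simpa [y, Real.exp_ne_zero] using this
  have heq : ∑ i, ∑ j, x i * x j * (Matrix.of fun i j : Fin n =>
      (((((i : ℕ) + 1) + ((j : ℕ) + 1)) ^ (((i : ℕ) + 1) + ((j : ℕ) + 1)) : ℕ) : ℝ)) i j
      = ∑ i, ∑ j, y i * y j * Real.exp (g i j) := by
    refine Finset.sum_congr rfl fun i _ => Finset.sum_congr rfl fun j _ => ?_
    rw [Matrix.of_apply, hK]
    have : F i j = c i + c j + g i j := by
      simp only [c, g, Matrix.of_apply]
      rw [hsymm o j]; ring
    rw [this, Real.exp_add, Real.exp_add]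
    simp only [y]
    ring
  rw [heq]
  refine lt_of_lt_of_le ?_ (exp_bound hg y)
  by_cases hS : ∑ i, y i = 0
  · have := hgq y
    rw [this, hS]
    simp only [zero_mul, sub_zero]
    have := cond_pos y hy hS
    simpa using this
  · have := hgnn y
    positivity
end
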